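/- Let α be the real root of x^3 - x - 1 = 0 and let A : ℕ → ℕ satisfy A(1)=1, A(2)=2, A(3)=2, A(k)=A(k-2)+A(k-3) for k ≥ 4. For ℓ ≥ 7, let k ≥ 7 be minimal such that A(k) ≥ ℓ. Then k ≤ ⌈(log₂ ℓ - log₂ 0.94)/log₂ α⌉. -/

import Mathlib

/-!
Both `A` and `n ↦ α ^ n` satisfy `u (n + 3) = u (n + 1) + u n`, so the bound `0.94 * α ^ n ≤ A n`
propagates from the indices `7, 8, 9`. The ceiling in the theorem is the least `N` with
`ℓ ≤ 0.94 * α ^ N`; it is at least `7` because `0.94 * α ^ 6 < ℓ`, so `ℓ ≤ A N` and the minimality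
of `k` gives `k ≤ N`.
-/

lemma pos_of_pow_three_eq_add_one {α : ℝ} (hα : α ^ 3 = α + 1) : 0 < α := by
  by_contra! hnonpos
  have hcube : α ^ 3 ≤ 0 := Odd.pow_nonpos (by decide) hnonpos
  have hle : α ≤ -1 := by linarith
  have hsq : 1 ≤ α ^ 2 := by nlinarith [hle]
  have hcube_le : α ^ 3 ≤ α := calc
    α ^ 3 = α * α ^ 2 := by ring
    _ ≤ α * 1 := mul_le_mul_of_nonpos_left hsq hnonpos
    _ = α := mul_one α
  linarith

lemma one_lt_of_pow_three_eq_add_one {α : ℝ} (hα : α ^ 3 = α + 1) : 1 < α := by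
  have hpos := pos_of_pow_three_eq_add_one hα
  have hcube : 1 < α ^ 3 := by linarith
  exact (one_lt_pow_iff_of_nonneg hpos.le three_ne_zero).1 hcube

lemma lt_d3_of_pow_three_eq_add_one {α : ℝ} (hα : α ^ 3 = α + 1) : α < 1.325 := by
  by_contra! hle
  have hprod : 1.325 * (1.325 ^ 2 - 1) ≤ α * (α ^ 2 - 1) := by gcongr
  norm_num at hprod
  linarith

lemma pow_le_d3_pow_of_pow_three_eq_add_one {α : ℝ} (hα : α ^ 3 = α + 1) (n : ℕ) :
    α ^ n ≤ 1.325 ^ n :=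
  pow_le_pow_left₀ (pos_of_pow_three_eq_add_one hα).le (lt_d3_of_pow_three_eq_add_one hα).le n

lemma mul_pow_six_lt_seven_of_pow_three_eq_add_one {α : ℝ} (hα : α ^ 3 = α + 1) :
    0.94 * α ^ 6 < 7 := by
  have hpow := pow_le_d3_pow_of_pow_three_eq_add_one hα 6
  norm_num at hpow ⊢
  linarith

lemma mul_pow_le_of_padovan_rec {R : Type*} [CommSemiring R] [PartialOrder R] [IsOrderedAddMonoid R]
    {α c : R} (hα : α ^ 3 = α + 1) {u : ℕ → R} (hrec : ∀ n, u (n + 3) = u (n + 1) + u n)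
    (h0 : c ≤ u 0) (h1 : c * α ≤ u 1) (h2 : c * α ^ 2 ≤ u 2) : ∀ n, c * α ^ n ≤ u n
  | 0 => by simpa using h0
  | 1 => by simpa using h1
  | 2 => h2
  | n + 3 =>
    calc c * α ^ (n + 3) = c * α ^ (n + 1) + c * α ^ n := by rw [pow_add, hα]; ring
      _ ≤ u (n + 1) + u n :=
        add_le_add (mul_pow_le_of_padovan_rec hα hrec h0 h1 h2 (n + 1))
          (mul_pow_le_of_padovan_rec hα hrec h0 h1 h2 n)
      _ = u (n + 3) := (hrec n).symm

lemma mul_pow_le_padovan {α : ℝ} (hα : α ^ 3 = α + 1) {A : ℕ → ℕ}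
    (h1 : A 1 = 1) (h2 : A 2 = 2) (h3 : A 3 = 2)
    (hrec : ∀ k, 4 ≤ k → A k = A (k - 2) + A (k - 3)) {n : ℕ} (hn : 7 ≤ n) :
    0.94 * α ^ n ≤ A n := by
  have hrec' (n : ℕ) : A (n + 4) = A (n + 2) + A (n + 1) := hrec (n + 4) (by omega)
  have h7 : A 7 = 7 := by simp only [hrec', h1, h2, h3]
  have h8 : A 8 = 9 := by simp only [hrec', h1, h2, h3]
  have h9 : A 9 = 12 := by simp only [hrec', h1, h2, h3]
  have hpow (n : ℕ) : 0.94 * α ^ n ≤ 0.94 * 1.325 ^ n := by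
    gcongr 0.94 * ?_
    exact pow_le_d3_pow_of_pow_three_eq_add_one hα n
  obtain ⟨n, rfl⟩ := Nat.exists_eq_add_of_le' hn
  rw [pow_add, mul_comm (α ^ n), ← mul_assoc]
  refine mul_pow_le_of_padovan_rec hα (u := fun n ↦ (A (n + 7) : ℝ)) (fun n ↦ ?_) ?_ ?_ ?_ n
  · exact_mod_cast hrec' (n + 6)
  · calc 0.94 * α ^ 7 ≤ 0.94 * 1.325 ^ 7 := hpow 7
      _ ≤ A 7 := by norm_num [h7]
  · calc 0.94 * α ^ 7 * α = 0.94 * α ^ 8 := by ring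
      _ ≤ 0.94 * 1.325 ^ 8 := hpow 8
      _ ≤ A 8 := by norm_num [h8]
  · calc 0.94 * α ^ 7 * α ^ 2 = 0.94 * α ^ 9 := by ring
      _ ≤ 0.94 * 1.325 ^ 9 := hpow 9
      _ ≤ A 9 := by norm_num [h9]

lemma le_mul_pow_natCeil_logb_div {a c x : ℝ} (ha : 1 < a) (hc : 0 < c) (hx : 0 < x) :
    x ≤ c * a ^ ⌈Real.logb a (x / c)⌉₊ := by
  rw [← div_le_iff₀' hc, ← Real.rpow_natCast, ← Real.logb_le_iff_le_rpow ha (by positivity)]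
  exact Nat.le_ceil _

lemma lt_natCeil_logb_div {a c x : ℝ} {m : ℕ} (ha : 1 < a) (hc : 0 < c)
    (h : c * a ^ m < x) : m < ⌈Real.logb a (x / c)⌉₊ := by
  have hpow : a ^ m < x / c := (lt_div_iff₀' hc).2 h
  rw [Nat.lt_ceil, Real.lt_logb_iff_rpow_lt ha ((by positivity : 0 < a ^ m).trans hpow),
    Real.rpow_natCast]
  exact hpow

lemma logb_sub_logb_div_logb {a b c x : ℝ} (hb : 0 < b) (hb1 : b ≠ 1) (hc : c ≠ 0) (hx : x ≠ 0) :
    (Real.logb b x - Real.logb b c) / Real.logb b a = Real.logb a (x / c) := by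
  have hlogb : Real.log b ≠ 0 := Real.log_ne_zero_of_pos_of_ne_one hb hb1
  rw [← Real.logb_div hx hc]
  simp only [Real.logb, div_div_div_cancel_right₀ hlogb]

theorem stmt_12_general (α : ℝ) (hα : α ^ 3 - α - 1 = 0)
    (A : ℕ → ℕ) (h1 : A 1 = 1) (h2 : A 2 = 2) (h3 : A 3 = 2)
    (hrec : ∀ k, 4 ≤ k → A k = A (k - 2) + A (k - 3))
    (ℓ : ℝ) (hℓ : 0.94 * α ^ 6 < ℓ) (k : ℕ) (hmin : ∀ j, 7 ≤ j → ℓ ≤ A j → k ≤ j) :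
    (k : ℤ) ≤ ⌈(Real.logb 2 ℓ - Real.logb 2 0.94) / Real.logb 2 α⌉ := by
  have hroot : α ^ 3 = α + 1 := by linarith
  have hone := one_lt_of_pow_three_eq_add_one hroot
  have hpos : 0 < ℓ := lt_trans (by positivity) hℓ
  rw [logb_sub_logb_div_logb two_pos (by norm_num) (by norm_num) hpos.ne']
  set N := ⌈Real.logb α (ℓ / 0.94)⌉₊
  have h7N : 7 ≤ N := lt_natCeil_logb_div hone (by norm_num) hℓ
  have hℓN : ℓ ≤ A N :=
    (le_mul_pow_natCeil_logb_div hone (by norm_num) hpos).trans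
      (mul_pow_le_padovan hroot h1 h2 h3 hrec h7N)
  have hlog : 0 < Real.logb α (ℓ / 0.94) := Nat.ceil_pos.1 (by omega)
  rw [← Int.natCast_ceil_eq_ceil hlog.le]
  exact_mod_cast hmin N h7N hℓN

theorem stmt_12 (α : ℝ) (hα : α ^ 3 - α - 1 = 0)
    (A : ℕ → ℕ) (h1 : A 1 = 1) (h2 : A 2 = 2) (h3 : A 3 = 2)
    (hrec : ∀ k, 4 ≤ k → A k = A (k - 2) + A (k - 3))
    (ℓ : ℕ) (hℓ : 7 ≤ ℓ) (k : ℕ) (hk : 7 ≤ k) (hAk : ℓ ≤ A k)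
    (hmin : ∀ j, 7 ≤ j → ℓ ≤ A j → k ≤ j) :
    (k : ℤ) ≤ ⌈(Real.logb 2 ℓ - Real.logb 2 0.94) / Real.logb 2 α⌉ :=
  stmt_12_general α hα A h1 h2 h3 hrec ℓ
    ((mul_pow_six_lt_seven_of_pow_three_eq_add_one (by linarith)).trans_le (mod_cast hℓ)) k
    fun j hj hℓj ↦ hmin j hj (mod_cast hℓj)
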